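/- Let q > 0, H > 0, r > 0 and φ ∈ (π, 2π), and set ρ = (rH/(2q))(1 + cos φ). Consider the quadratic equation L² + L·r√H·sin φ + (rq/2)(1 − cos φ) = 0 in the unknown L ∈ ℝ, whose positive solutions parametrize the angular momenta of repulsive Kepler trajectories through the point r(cos φ, sin φ, 0) with forward asymptotic velocity (√H, 0, 0). Then: (i) if ρ < 1 the equation has no real solutions; (ii) if ρ = 1 it has the unique solution L = −(r√H/2) sin φ, which is positive; (iii) if ρ > 1 it has exactly two solutions, both positive, namely L_± = −sin φ · (r√H/2)(1 ± √(1 − 1/ρ)), and 0 < L₋ < L₊. -/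

import Mathlib

/-!
Put `A = -sin φ · r√H/2` and `c = (rq/2)(1 - cos φ)`. On `(π, 2π)` the sine is negative, so
`A > 0` and `c > 0`, and `1 - cos² φ = sin² φ` gives `c ρ = A²`. The quadratic is
`(L - A)² - (A² - c)` with `A² - c = c (ρ - 1)`, so the sign of `ρ - 1` decides solvability,
and for `ρ > 1` one has `A² - c = (A √(1 - 1/ρ))²` with `0 < √(1 - 1/ρ) < 1`.
-/

noncomputable section

/-- The algebraic core of the scattering problem for the repulsive Kepler system: the
quadratic `L² + L·r√H·sin φ + (rq/2)(1 − cos φ) = 0` whose positive roots parametrize the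
angular momenta of trajectories through `r(cos φ, sin φ, 0)` (with `φ ∈ (π, 2π)`) with
forward asymptotic velocity `(√H, 0, 0)`.  With `ρ = (rH/(2q))(1 + cos φ)`:
(i) if `ρ < 1` there are no real roots; (ii) if `ρ = 1` there is the unique root
`L = −(r√H/2)·sin φ > 0`; (iii) if `ρ > 1` there are exactly two roots
`L_± = −sin φ·(r√H/2)(1 ± √(1 − 1/ρ))`, both positive, with `L₋ < L₊`. -/
theorem kepler_scattering_quadratic (q H r φ : ℝ)
    (hq : 0 < q) (hH : 0 < H) (hr : 0 < r)
    (hφ : φ ∈ Set.Ioo Real.pi (2 * Real.pi)) :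
    let ρ : ℝ := r * H / (2 * q) * (1 + Real.cos φ)
    let P : ℝ → ℝ := fun L =>
      L ^ 2 + L * (r * Real.sqrt H * Real.sin φ) + r * q / 2 * (1 - Real.cos φ)
    (ρ < 1 → ∀ L : ℝ, P L ≠ 0) ∧
    (ρ = 1 →
      ((∀ L : ℝ, P L = 0 ↔ L = -(r * Real.sqrt H / 2) * Real.sin φ) ∧
        0 < -(r * Real.sqrt H / 2) * Real.sin φ)) ∧
    (1 < ρ →
      ((∀ L : ℝ, P L = 0 ↔
          L = -Real.sin φ * (r * Real.sqrt H / 2) * (1 - Real.sqrt (1 - 1 / ρ)) ∨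
          L = -Real.sin φ * (r * Real.sqrt H / 2) * (1 + Real.sqrt (1 - 1 / ρ))) ∧
        0 < -Real.sin φ * (r * Real.sqrt H / 2) * (1 - Real.sqrt (1 - 1 / ρ)) ∧
        -Real.sin φ * (r * Real.sqrt H / 2) * (1 - Real.sqrt (1 - 1 / ρ)) <
          -Real.sin φ * (r * Real.sqrt H / 2) * (1 + Real.sqrt (1 - 1 / ρ)))) := by
  intro ρ P
  have hsin : Real.sin φ < 0 := by
    have h := Real.sin_pos_of_pos_of_lt_pi (x := φ - Real.pi)
      (by linarith [hφ.1]) (by linarith [hφ.2])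
    rw [Real.sin_sub_pi] at h
    linarith
  have hsc := Real.sin_sq_add_cos_sq φ
  have hcos : Real.cos φ < 1 := by nlinarith [sq_nonneg (Real.cos φ)]
  have hsq : Real.sqrt H ^ 2 = H := Real.sq_sqrt hH.le
  have hsH : 0 < Real.sqrt H := Real.sqrt_pos.2 hH
  obtain ⟨A, hA⟩ : ∃ A, A = -Real.sin φ * (r * Real.sqrt H / 2) := ⟨_, rfl⟩
  obtain ⟨c, hc⟩ : ∃ c, c = r * q / 2 * (1 - Real.cos φ) := ⟨_, rfl⟩
  have hApos : 0 < A := by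
    rw [hA]
    exact mul_pos (by linarith) (by positivity)
  have hcpos : 0 < c := by
    rw [hc]
    exact mul_pos (by positivity) (by linarith)
  have key : c * ρ = A ^ 2 := by
    have h1 : c * ρ = r ^ 2 * H / 4 * (1 - Real.cos φ ^ 2) := by
      simp only [hc, ρ]
      field_simp
      ring
    have h2 : A ^ 2 = r ^ 2 * Real.sqrt H ^ 2 / 4 * Real.sin φ ^ 2 := by
      rw [hA]
      ring
    rw [h1, h2, hsq, ← hsc]
    ring
  have hP : ∀ L, P L = (L - A) ^ 2 - c * (ρ - 1) := by
    intro L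
    have h : P L = (L - A) ^ 2 - A ^ 2 + c := by
      simp only [P, hA, hc]
      ring
    rw [h, ← key]
    ring
  have hA' : -(r * Real.sqrt H / 2) * Real.sin φ = A := by
    rw [hA]
    ring
  rw [hA', ← hA]
  clear_value ρ P
  refine ⟨fun hρ L => ?_, fun hρ => ⟨fun L => ?_, hApos⟩, fun hρ => ?_⟩
  · rw [hP]
    nlinarith [sq_nonneg (L - A), mul_pos hcpos (sub_pos.2 hρ)]
  · rw [hP, hρ, sub_self, mul_zero, sub_zero, sq_eq_zero_iff, sub_eq_zero]
  · have hρ0 : 0 < ρ := by linarith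
    have hinv : 1 / ρ < 1 := by rwa [div_lt_one hρ0]
    have hinv0 : 0 < 1 / ρ := by positivity
    obtain ⟨s, hs⟩ : ∃ s, s = Real.sqrt (1 - 1 / ρ) := ⟨_, rfl⟩
    have hs2 : s ^ 2 = 1 - 1 / ρ := by
      rw [hs]
      exact Real.sq_sqrt (by linarith)
    have hs0 : 0 < s := by
      rw [hs]
      exact Real.sqrt_pos.2 (by linarith)
    have hs1 : s < 1 := by nlinarith
    rw [← hs]
    have hdisc : c * (ρ - 1) = (A * s) ^ 2 := by
      rw [mul_pow, hs2, ← key]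
      field_simp
    refine ⟨fun L => ?_, mul_pos hApos (by linarith), by nlinarith [mul_pos hApos hs0]⟩
    rw [hP, hdisc, sub_eq_zero, sq_eq_sq_iff_eq_or_eq_neg, or_comm]
    constructor <;> rintro (h | h) <;> [left; right; left; right] <;> linarith
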